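/- Suppose X is a c-quasiconvex metric space, G ⊊ X is a b-uniform domain, and γ is a (ν,h)-solid arc in G with endpoints x, y. Then there is a constant μ₃ = μ₃(b,c,ν,h) ≥ 1 such that diam(γ) ≤ max{μ₃|x−y|, 2(e^h − 1)·min{δ_G(x), δ_G(y)}}. -/

import Mathlib

open Metric Set Filter

section QHDefs

variable {X : Type*} [MetricSpace X] {Y : Type*} [MetricSpace Y]

/-- Distance to the boundary of `G`. -/
noncomputable def bdist (G : Set X) (z : X) : ℝ := Metric.infDist z (frontier G)

/-- A unit-speed (1-Lipschitz, arclength-parametrized) rectifiable curve in `G`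
from `x` to `y`, parametrized on `[0, L]`, where `L` is its length. -/
structure CurveIn (G : Set X) (γ : ℝ → X) (L : ℝ) (x y : X) : Prop where
  nonneg : 0 ≤ L
  lip : LipschitzOnWith 1 γ (Set.Icc 0 L)
  source : γ 0 = x
  target : γ L = y
  mem : ∀ t ∈ Set.Icc 0 L, γ t ∈ G

/-- Quasihyperbolic length of the subcurve `γ|[s,t]` in `G`: `∫_γ |dz|/δ_G(z)`. -/
noncomputable def qhLengthOn (G : Set X) (γ : ℝ → X) (s t : ℝ) : ℝ :=
  ∫ u in s..t, 1 / bdist G (γ u)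

/-- Quasihyperbolic length of a curve parametrized on `[0,L]`. -/
noncomputable def qhLength (G : Set X) (γ : ℝ → X) (L : ℝ) : ℝ := qhLengthOn G γ 0 L

/-- Quasihyperbolic distance in `G`. -/
noncomputable def qhDist (G : Set X) (x y : X) : ℝ :=
  sInf {l | ∃ γ L, CurveIn G γ L x y ∧ qhLength G γ L = l}

/-- `X` is a `c`-quasiconvex metric space. -/
def QCSpace (c : ℝ) (X : Type*) [MetricSpace X] : Prop :=
  ∀ x y : X, ∃ γ L, CurveIn (Set.univ : Set X) γ L x y ∧ L ≤ c * dist x y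

/-- A set `G` is `c`-quasiconvex. -/
def QCSet (c : ℝ) (G : Set X) : Prop :=
  ∀ x ∈ G, ∀ y ∈ G, ∃ γ L, CurveIn G γ L x y ∧ L ≤ c * dist x y

/-- A domain: a nonempty connected open set. -/
def IsDomainSet (G : Set X) : Prop := IsOpen G ∧ IsConnected G

/-- A proper domain: a nonempty connected open set, different from the whole space. -/
def IsProperDomain (G : Set X) : Prop := IsOpen G ∧ IsConnected G ∧ G ≠ Set.univ

/-- `G` is an `a`-John domain: each pair of points is joined by a rectifiable arc
satisfying the cone condition. -/
def IsJohn (a : ℝ) (G : Set X) : Prop :=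
  ∀ x ∈ G, ∀ y ∈ G, ∃ γ L, CurveIn G γ L x y ∧
    ∀ t ∈ Set.Icc 0 L, min t (L - t) ≤ a * bdist G (γ t)

/-- `G` is a `b`-uniform domain: each pair of points is joined by a double `b`-cone arc. -/
def IsUniform (b : ℝ) (G : Set X) : Prop :=
  ∀ x ∈ G, ∀ y ∈ G, ∃ γ L, CurveIn G γ L x y ∧ L ≤ b * dist x y ∧
    ∀ t ∈ Set.Icc 0 L, min t (L - t) ≤ b * bdist G (γ t)

/-- `G` is a locally `a`-John domain. -/
def LocallyJohn (a : ℝ) (G : Set X) : Prop :=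
  ∀ x ∈ G, ∀ r : ℝ, 0 < r → r ≤ bdist G x → IsJohn a (Metric.ball x r)

/-- The `h`-coarse quasihyperbolic length of the subcurve `γ|[s,t]` in `G`:
the supremum of sums `Σ k_G(x_{j-1},x_j)` over `h`-coarse sequences of successive
points of the arc (with the convention that it is `0` if there are none). -/
noncomputable def coarseQHLength (G : Set X) (γ : ℝ → X) (s t h : ℝ) : ℝ :=
  sSup {S | ∃ n : ℕ, 0 < n ∧ ∃ u : ℕ → ℝ,
    (∀ i < n, u i ≤ u (i + 1)) ∧ (∀ i ≤ n, u i ∈ Set.Icc s t) ∧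
    (∀ i < n, h ≤ qhDist G (γ (u i)) (γ (u (i + 1)))) ∧
    S = ∑ i ∈ Finset.range n, qhDist G (γ (u i)) (γ (u (i + 1)))}

/-- `γ` (parametrized on `[0,L]`) is a `(ν,h)`-solid arc in `G`. -/
def SolidArc (G : Set X) (γ : ℝ → X) (L ν h : ℝ) : Prop :=
  ∀ s t : ℝ, 0 ≤ s → s ≤ t → t ≤ L →
    coarseQHLength G γ s t h ≤ ν * qhDist G (γ s) (γ t)

/-- `γ` (parametrized on `[0,L]`) is an `ε`-short arc in `G`. -/
def ShortArc (G : Set X) (γ : ℝ → X) (L ε : ℝ) : Prop :=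
  qhLength G γ L ≤ qhDist G (γ 0) (γ L) + ε

/-- A map is weakly `H`-quasisymmetric. -/
def WeakQS (H : ℝ) (f : X → Y) : Prop :=
  ∀ x a b : X, dist x a ≤ dist x b → dist (f x) (f a) ≤ H * dist (f x) (f b)

/-- Image of a subset `D ⊆ G` under a homeomorphism `f : G ≃ₜ G'`, as a subset of `Y`. -/
def imSet {G : Set X} {G' : Set Y} (f : ↥G ≃ₜ ↥G') (D : Set X) : Set Y :=
  Subtype.val '' (f '' (Subtype.val ⁻¹' D))

/-- `f : G ≃ₜ G'` is `M`-quasihyperbolic. -/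
def MQH (M : ℝ) {G : Set X} {G' : Set Y} (f : ↥G ≃ₜ ↥G') : Prop :=
  ∀ x y : ↥G, (1 / M) * qhDist G ↑x ↑y ≤ qhDist G' ↑(f x) ↑(f y) ∧
    qhDist G' ↑(f x) ↑(f y) ≤ M * qhDist G ↑x ↑y

/-- `f : G ≃ₜ G'` is `C`-coarsely `M`-quasihyperbolic. -/
def CQH (M C : ℝ) {G : Set X} {G' : Set Y} (f : ↥G ≃ₜ ↥G') : Prop :=
  ∀ x y : ↥G, (qhDist G ↑x ↑y - C) / M ≤ qhDist G' ↑(f x) ↑(f y) ∧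
    qhDist G' ↑(f x) ↑(f y) ≤ M * qhDist G ↑x ↑y + C

/-- `f : G ≃ₜ G'` is freely `φ`-quasiconformal: in every subdomain, the
quasihyperbolic distances of `f` and `f⁻¹` are controlled by `φ`. -/
def FQC (φ : ℝ → ℝ) {G : Set X} {G' : Set Y} (f : ↥G ≃ₜ ↥G') : Prop :=
  ∀ D : Set X, ∀ hD : D ⊆ G, IsDomainSet D →
    ∀ x : X, ∀ hx : x ∈ D, ∀ y : X, ∀ hy : y ∈ D,
      qhDist (imSet f D) ↑(f ⟨x, hD hx⟩) ↑(f ⟨y, hD hy⟩) ≤ φ (qhDist D x y) ∧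
      qhDist D x y ≤ φ (qhDist (imSet f D) ↑(f ⟨x, hD hx⟩) ↑(f ⟨y, hD hy⟩))

end QHDefs

section SolidArcs

variable {X : Type*} [MetricSpace X] {G : Set X} {γ : ℝ → X} {L : ℝ} {x y : X}

lemma bdist_pos {c : ℝ} (hX : QCSpace c X) (hG : IsProperDomain G) {z : X} (hz : z ∈ G) :
    0 < bdist G z := by
  obtain ⟨hopen, -, hne⟩ := hG
  have hfr : (frontier G).Nonempty := by
    by_contra hempty
    have hclopen : IsClopen G := by
      rw [isClopen_iff_frontier_eq_empty]
      exact not_nonempty_iff_eq_empty.mp hempty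
    apply hne
    refine eq_univ_of_forall fun w => ?_
    obtain ⟨σ, ℓ, hσ, -⟩ := hX z w
    have h0 : (0 : ℝ) ∈ Icc 0 ℓ := ⟨le_rfl, hσ.nonneg⟩
    have hpre : IsPreconnected (σ '' Icc 0 ℓ) :=
      isPreconnected_Icc.image σ hσ.lip.continuousOn
    have hsub := hpre.subset_isClopen hclopen
      ⟨σ 0, mem_image_of_mem σ h0, by rw [hσ.source]; exact hz⟩
    rw [← hσ.target]
    exact hsub (mem_image_of_mem σ ⟨hσ.nonneg, le_rfl⟩)
  rw [bdist, ← isClosed_frontier.notMem_iff_infDist_pos hfr]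
  rw [hopen.frontier_eq]
  exact fun hmem => hmem.2 hz

lemma bdist_le_bdist_add_dist (z w : X) : bdist G z ≤ bdist G w + dist z w :=
  infDist_le_infDist_add_dist

lemma CurveIn.continuousOn_bdist (hγ : CurveIn G γ L x y) :
    ContinuousOn (fun u => bdist G (γ u)) (Icc 0 L) :=
  (continuous_infDist_pt _).comp_continuousOn hγ.lip.continuousOn

lemma CurveIn.dist_le (hγ : CurveIn G γ L x y) {s t : ℝ} (hs : 0 ≤ s) (hst : s ≤ t)
    (ht : t ≤ L) : dist (γ s) (γ t) ≤ t - s := by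
  have := hγ.lip.dist_le_mul s ⟨hs, hst.trans ht⟩ t ⟨hs.trans hst, ht⟩
  rw [dist_comm s t, Real.dist_eq, abs_of_nonneg (sub_nonneg.mpr hst)] at this
  simpa using this

lemma CurveIn.intervalIntegrable (hpos : ∀ z ∈ G, 0 < bdist G z) (hγ : CurveIn G γ L x y)
    {s t : ℝ} (hs : 0 ≤ s) (hst : s ≤ t) (ht : t ≤ L) :
    IntervalIntegrable (fun u => 1 / bdist G (γ u)) MeasureTheory.volume s t := by
  apply ContinuousOn.intervalIntegrable
  rw [uIcc_of_le hst]
  have hsub : Icc s t ⊆ Icc 0 L := Icc_subset_Icc hs ht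
  exact continuousOn_const.div (hγ.continuousOn_bdist.mono hsub)
    fun u hu => (hpos _ (hγ.mem u (hsub hu))).ne'

lemma CurveIn.subcurve (hγ : CurveIn G γ L x y) {s t : ℝ} (hs : 0 ≤ s) (hst : s ≤ t)
    (ht : t ≤ L) : CurveIn G (fun u => γ (u + s)) (t - s) (γ s) (γ t) where
  nonneg := sub_nonneg.mpr hst
  lip := by
    refine LipschitzOnWith.of_dist_le_mul fun u hu v hv => ?_
    have := hγ.lip.dist_le_mul (u + s) ⟨by linarith [hu.1], by linarith [hu.2]⟩
      (v + s) ⟨by linarith [hv.1], by linarith [hv.2]⟩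
    simpa using this
  source := by simp
  target := by simp
  mem u hu := hγ.mem _ ⟨by linarith [hu.1], by linarith [hu.2]⟩

lemma CurveIn.qhLength_nonneg (hγ : CurveIn G γ L x y) : 0 ≤ qhLength G γ L :=
  intervalIntegral.integral_nonneg hγ.nonneg fun _ _ => one_div_nonneg.mpr infDist_nonneg

lemma CurveIn.qhDist_le (hγ : CurveIn G γ L x y) : qhDist G x y ≤ qhLength G γ L := by
  refine csInf_le ⟨0, ?_⟩ ⟨γ, L, hγ, rfl⟩
  rintro _ ⟨σ, ℓ, hσ, rfl⟩
  exact hσ.qhLength_nonneg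

lemma qhDist_nonneg (x y : X) : 0 ≤ qhDist G x y := by
  apply Real.sInf_nonneg
  rintro _ ⟨σ, ℓ, hσ, rfl⟩
  exact hσ.qhLength_nonneg

lemma CurveIn.qhDist_le_qhLengthOn (hγ : CurveIn G γ L x y) {s t : ℝ} (hs : 0 ≤ s)
    (hst : s ≤ t) (ht : t ≤ L) : qhDist G (γ s) (γ t) ≤ qhLengthOn G γ s t := by
  refine (hγ.subcurve hs hst ht).qhDist_le.trans_eq ?_
  unfold qhLength qhLengthOn
  rw [intervalIntegral.integral_comp_add_right (fun u => 1 / bdist G (γ u))]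
  simp

lemma integral_one_div_add {m ℓ : ℝ} (hm : 0 < m) (hℓ : 0 ≤ ℓ) :
    ∫ u in (0 : ℝ)..ℓ, 1 / (m + u) = Real.log (1 + ℓ / m) := by
  rw [intervalIntegral.integral_comp_add_left (fun u => 1 / u),
    integral_one_div_of_pos (by linarith) (by linarith)]
  congr 1
  field_simp
  ring

lemma integral_one_div_add_sub {m ℓ : ℝ} (hm : 0 < m) (hℓ : 0 ≤ ℓ) :
    ∫ u in (0 : ℝ)..ℓ, 1 / (m + (ℓ - u)) = Real.log (1 + ℓ / m) := by
  rw [intervalIntegral.integral_comp_sub_left (fun u => 1 / (m + u))]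
  simpa using integral_one_div_add hm hℓ

lemma intervalIntegrable_one_div_add {m ℓ : ℝ} (hm : 0 < m) (hℓ : 0 ≤ ℓ) :
    IntervalIntegrable (fun u => 1 / (m + u)) MeasureTheory.volume 0 ℓ := by
  apply ContinuousOn.intervalIntegrable
  rw [uIcc_of_le hℓ]
  exact continuousOn_const.div (by fun_prop) fun u hu => by linarith [hu.1]

lemma intervalIntegrable_one_div_add_sub {m ℓ : ℝ} (hm : 0 < m) (hℓ : 0 ≤ ℓ) :
    IntervalIntegrable (fun u => 1 / (m + (ℓ - u))) MeasureTheory.volume 0 ℓ := by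
  apply ContinuousOn.intervalIntegrable
  rw [uIcc_of_le hℓ]
  exact continuousOn_const.div (by fun_prop) fun u hu => by linarith [hu.2]

lemma log_one_add_div_mono {m s t : ℝ} (hm : 0 < m) (hs : 0 ≤ s) (hst : s ≤ t) :
    Real.log (1 + s / m) ≤ Real.log (1 + t / m) :=
  Real.log_le_log (by positivity) (by gcongr)

lemma CurveIn.log_le_qhLength_source (hpos : ∀ z ∈ G, 0 < bdist G z)
    (hγ : CurveIn G γ L x y) :
    Real.log (1 + dist x y / bdist G x) ≤ qhLength G γ L := by
  have hx : 0 < bdist G x := hpos x (hγ.source ▸ hγ.mem 0 ⟨le_rfl, hγ.nonneg⟩)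
  have hd := hγ.dist_le le_rfl hγ.nonneg le_rfl
  rw [hγ.source, hγ.target, sub_zero] at hd
  refine (log_one_add_div_mono hx dist_nonneg hd).trans ?_
  rw [← integral_one_div_add hx hγ.nonneg]
  refine intervalIntegral.integral_mono_on hγ.nonneg
    (intervalIntegrable_one_div_add hx hγ.nonneg)
    (hγ.intervalIntegrable hpos le_rfl hγ.nonneg le_rfl) fun u hu => ?_
  refine one_div_le_one_div_of_le (hpos _ (hγ.mem u hu)) ?_
  have h1 := hγ.dist_le le_rfl hu.1 hu.2
  rw [hγ.source, dist_comm] at h1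
  linarith [bdist_le_bdist_add_dist (G := G) (γ u) x]

lemma CurveIn.log_le_qhLength_target (hpos : ∀ z ∈ G, 0 < bdist G z)
    (hγ : CurveIn G γ L x y) :
    Real.log (1 + dist x y / bdist G y) ≤ qhLength G γ L := by
  have hy : 0 < bdist G y := hpos y (hγ.target ▸ hγ.mem L ⟨hγ.nonneg, le_rfl⟩)
  have hd := hγ.dist_le le_rfl hγ.nonneg le_rfl
  rw [hγ.source, hγ.target, sub_zero] at hd
  refine (log_one_add_div_mono hy dist_nonneg hd).trans ?_
  rw [← integral_one_div_add_sub hy hγ.nonneg]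
  refine intervalIntegral.integral_mono_on hγ.nonneg
    (intervalIntegrable_one_div_add_sub hy hγ.nonneg)
    (hγ.intervalIntegrable hpos le_rfl hγ.nonneg le_rfl) fun u hu => ?_
  refine one_div_le_one_div_of_le (hpos _ (hγ.mem u hu)) ?_
  have h1 := hγ.dist_le hu.1 hu.2 le_rfl
  rw [hγ.target] at h1
  linarith [bdist_le_bdist_add_dist (G := G) (γ u) y]

lemma dist_le_of_log_le {d m q : ℝ} (hm : 0 < m) (hd : 0 ≤ d)
    (h : Real.log (1 + d / m) ≤ q) : d ≤ (Real.exp q - 1) * m := by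
  rw [Real.log_le_iff_le_exp (by positivity)] at h
  rw [← div_le_iff₀ hm]
  linarith

lemma log_le_qhDist_source {b : ℝ} (hpos : ∀ z ∈ G, 0 < bdist G z) (hU : IsUniform b G)
    (hx : x ∈ G) (hy : y ∈ G) : Real.log (1 + dist x y / bdist G x) ≤ qhDist G x y := by
  obtain ⟨σ, ℓ, hσ, -⟩ := hU x hx y hy
  refine le_csInf ⟨_, σ, ℓ, hσ, rfl⟩ ?_
  rintro _ ⟨τ, k, hτ, rfl⟩
  exact hτ.log_le_qhLength_source hpos

lemma log_le_qhDist_target {b : ℝ} (hpos : ∀ z ∈ G, 0 < bdist G z) (hU : IsUniform b G)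
    (hx : x ∈ G) (hy : y ∈ G) : Real.log (1 + dist x y / bdist G y) ≤ qhDist G x y := by
  obtain ⟨σ, ℓ, hσ, -⟩ := hU x hx y hy
  refine le_csInf ⟨_, σ, ℓ, hσ, rfl⟩ ?_
  rintro _ ⟨τ, k, hτ, rfl⟩
  exact hτ.log_le_qhLength_target hpos

/-- In a uniform domain the quasihyperbolic distance grows logarithmically. -/
lemma qhDist_le_log {b m : ℝ} (hb : 1 ≤ b) (hpos : ∀ z ∈ G, 0 < bdist G z)
    (hU : IsUniform b G) (hx : x ∈ G) (hy : y ∈ G) (hm : 0 < m) (hmx : m ≤ bdist G x)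
    (hmy : m ≤ bdist G y) :
    qhDist G x y ≤ 2 * (2 * b + 1) * Real.log (1 + b * dist x y / m) := by
  obtain ⟨σ, ℓ, hσ, hℓ, hcone⟩ := hU x hx y hy
  have hI₁ := intervalIntegrable_one_div_add hm hσ.nonneg
  have hI₂ := intervalIntegrable_one_div_add_sub hm hσ.nonneg
  have hlen : qhLength G σ ℓ ≤ ∫ u in (0 : ℝ)..ℓ,
      (2 * b + 1) * (1 / (m + u) + 1 / (m + (ℓ - u))) := by
    refine intervalIntegral.integral_mono_on hσ.nonneg
      (hσ.intervalIntegrable hpos le_rfl hσ.nonneg le_rfl)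
      ((hI₁.add hI₂).const_mul _) fun u hu => ?_
    have hz := hpos _ (hσ.mem u hu)
    have hmin := hcone u hu
    have key : ∀ s : ℝ, 0 ≤ s → m + s ≤ (2 * b + 1) * bdist G (σ u) →
        1 / bdist G (σ u) ≤ (2 * b + 1) * (1 / (m + s)) := by
      intro s hs hle
      rw [mul_one_div, div_le_div_iff₀ hz (by positivity)]
      linarith
    have hnn₁ : 0 ≤ (2 * b + 1) * (1 / (m + u)) := by
      have := hu.1
      positivity
    have hnn₂ : 0 ≤ (2 * b + 1) * (1 / (m + (ℓ - u))) := by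
      have := sub_nonneg.mpr hu.2
      positivity
    rw [mul_add]
    rcases le_total u (ℓ - u) with hle | hle
    · rw [min_eq_left hle] at hmin
      have h1 := hσ.dist_le le_rfl hu.1 hu.2
      rw [hσ.source] at h1
      have h2 := bdist_le_bdist_add_dist (G := G) x (σ u)
      linarith [key u hu.1 (by linarith)]
    · rw [min_eq_right hle] at hmin
      have h1 := hσ.dist_le hu.1 hu.2 le_rfl
      rw [hσ.target, dist_comm] at h1
      have h2 := bdist_le_bdist_add_dist (G := G) y (σ u)
      linarith [key (ℓ - u) (sub_nonneg.mpr hu.2) (by linarith)]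
  rw [intervalIntegral.integral_const_mul, intervalIntegral.integral_add hI₁ hI₂,
    integral_one_div_add hm hσ.nonneg, integral_one_div_add_sub hm hσ.nonneg] at hlen
  have hmono := log_one_add_div_mono hm hσ.nonneg hℓ
  have hb' : 0 ≤ 2 * b + 1 := by linarith
  nlinarith [hσ.qhDist_le, mul_le_mul_of_nonneg_left hmono hb']

lemma CurveIn.sum_qhDist_le (hpos : ∀ z ∈ G, 0 < bdist G z) (hγ : CurveIn G γ L x y)
    {s t : ℝ} (hs : 0 ≤ s) (ht : t ≤ L) (n : ℕ) {u : ℕ → ℝ}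
    (hu : ∀ i < n, u i ≤ u (i + 1)) (hmem : ∀ i ≤ n, u i ∈ Icc s t) :
    ∑ i ∈ Finset.range n, qhDist G (γ (u i)) (γ (u (i + 1))) ≤ qhLengthOn G γ s (u n) := by
  induction n with
  | zero =>
    simp only [Finset.range_zero, Finset.sum_empty]
    exact intervalIntegral.integral_nonneg (hmem 0 le_rfl).1
      fun _ _ => one_div_nonneg.mpr infDist_nonneg
  | succ n ih =>
    have hn := hmem n n.le_succ
    have hn' := hmem (n + 1) le_rfl
    have hle := hu n n.lt_succ_self
    rw [Finset.sum_range_succ]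
    have h1 := ih (fun i hi => hu i (by omega)) (fun i hi => hmem i (by omega))
    have h2 := hγ.qhDist_le_qhLengthOn (hs.trans hn.1) hle (hn'.2.trans ht)
    have h3 : qhLengthOn G γ s (u n) + qhLengthOn G γ (u n) (u (n + 1)) =
        qhLengthOn G γ s (u (n + 1)) :=
      intervalIntegral.integral_add_adjacent_intervals
        (hγ.intervalIntegrable hpos hs hn.1 (hn.2.trans ht))
        (hγ.intervalIntegrable hpos (hs.trans hn.1) hle (hn'.2.trans ht))
    linarith

lemma SolidArc.sum_le {ν h : ℝ} (hpos : ∀ z ∈ G, 0 < bdist G z) (hγ : CurveIn G γ L x y)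
    (hsolid : SolidArc G γ L ν h) {s t : ℝ} (hs : 0 ≤ s) (hst : s ≤ t) (ht : t ≤ L) {n : ℕ}
    (hn : 0 < n) {u : ℕ → ℝ} (hu : ∀ i < n, u i ≤ u (i + 1))
    (hmem : ∀ i ≤ n, u i ∈ Icc s t)
    (hcoarse : ∀ i < n, h ≤ qhDist G (γ (u i)) (γ (u (i + 1)))) :
    ∑ i ∈ Finset.range n, qhDist G (γ (u i)) (γ (u (i + 1))) ≤
      ν * qhDist G (γ s) (γ t) := by
  refine le_trans ?_ (hsolid s t hs hst ht)
  refine le_csSup ⟨qhLengthOn G γ s t, ?_⟩ ⟨n, hn, u, hu, hmem, hcoarse, rfl⟩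
  rintro _ ⟨k, -, v, hv, hvmem, -, rfl⟩
  have hk := hvmem k le_rfl
  have h3 : qhLengthOn G γ s (v k) + qhLengthOn G γ (v k) t = qhLengthOn G γ s t :=
    intervalIntegral.integral_add_adjacent_intervals
      (hγ.intervalIntegrable hpos hs hk.1 (hk.2.trans ht))
      (hγ.intervalIntegrable hpos (hs.trans hk.1) hk.2 ht)
  have h4 : 0 ≤ qhLengthOn G γ (v k) t := intervalIntegral.integral_nonneg hk.2
    fun _ _ => one_div_nonneg.mpr infDist_nonneg
  linarith [hγ.sum_qhDist_le hpos hs ht k hv hvmem]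

lemma SolidArc.qhDist_le_max {ν h : ℝ} (hpos : ∀ z ∈ G, 0 < bdist G z)
    (hγ : CurveIn G γ L x y) (hsolid : SolidArc G γ L ν h) {s t v w : ℝ} (hs : 0 ≤ s)
    (hsv : s ≤ v) (hvw : v ≤ w) (hwt : w ≤ t) (ht : t ≤ L) :
    qhDist G (γ v) (γ w) ≤ max h (ν * qhDist G (γ s) (γ t)) := by
  rcases le_total (qhDist G (γ v) (γ w)) h with hle | hle
  · exact le_max_of_le_left hle
  · refine le_max_of_le_right ?_
    have := hsolid.sum_le hpos hγ hs (hsv.trans (hvw.trans hwt)) ht one_pos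
      (u := fun i => if i = 0 then v else w) (by simp [hvw])
      (fun i _ => by
        split_ifs
        exacts [⟨hsv, hvw.trans hwt⟩, ⟨hsv.trans hvw, hwt⟩])
      (by simpa using hle)
    simpa using this

lemma exists_monotone_levels {f : ℝ → ℝ} {s ρ : ℝ} (hρ : 0 ≤ ρ) (hfs : f s = 0) (n : ℕ) {w : ℝ}
    (hsw : s ≤ w) (hf : ContinuousOn f (Icc s w)) (hfw : n * ρ ≤ f w) :
    ∃ u : ℕ → ℝ, (∀ i < n, u i ≤ u (i + 1)) ∧ (∀ i ≤ n, u i ∈ Icc s w) ∧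
      ∀ i ≤ n, f (u i) = i * ρ := by
  induction n generalizing w with
  | zero =>
    refine ⟨fun _ => s, by simp, fun _ _ => ⟨le_rfl, hsw⟩, ?_⟩
    simp [hfs]
  | succ n ih =>
    obtain ⟨v, hv, hfv⟩ := intermediate_value_Icc hsw hf
      (show ((n + 1 : ℕ) : ℝ) * ρ ∈ Icc (f s) (f w) from ⟨by rw [hfs]; positivity, hfw⟩)
    obtain ⟨u, hu, hmem, hval⟩ := ih hv.1 (hf.mono (Icc_subset_Icc_right hv.2))
      (by rw [hfv]; push_cast; linarith)
    refine ⟨fun i => if i ≤ n then u i else v, fun i hi => ?_, fun i hi => ?_, fun i hi => ?_⟩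
    · rcases Nat.lt_succ_iff_lt_or_eq.mp hi with hi | rfl
      · simpa [hi.le, Nat.succ_le_of_lt hi] using hu i hi
      · simpa using (hmem i le_rfl).2
    · by_cases hin : i ≤ n
      · simpa [hin] using ⟨(hmem i hin).1, (hmem i hin).2.trans hv.2⟩
      · simpa [hin] using hv
    · by_cases hin : i ≤ n
      · simpa [hin] using hval i hin
      · obtain rfl : i = n + 1 := by omega
        simpa using hfv

lemma exists_bound_of_le_log {a β : ℝ} (ha : 0 < a) (hβ : 0 < β) (E : ℝ) :
    ∃ C : ℝ, 1 ≤ C ∧ ∀ r : ℝ, 0 ≤ r → r ≤ E + a * Real.log (1 + β * r) → r ≤ C := by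
  set B := 2 * a * β with hB
  have hBpos : 0 < B := by positivity
  refine ⟨max 1 (2 * (E + a * (1 / B - 1 + Real.log B))), le_max_left _ _,
    fun r hr hle => le_max_of_le_right ?_⟩
  have hpos : 0 < 1 + β * r := by positivity
  have hlog := Real.log_le_sub_one_of_pos (div_pos hpos hBpos)
  rw [Real.log_div hpos.ne' hBpos.ne'] at hlog
  have hmul := mul_le_mul_of_nonneg_left hlog ha.le
  have hsplit : a * ((1 + β * r) / B - 1) = a * (1 / B - 1) + r / 2 := by
    rw [hB]
    field_simp
    ring
  nlinarith

/-- A solid arc along which the boundary distance is comparable to `M` at the endpoints and at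
most `M` in between has diameter at most a constant multiple of `M`. -/
lemma SolidArc.dist_le_of_bdist_le {b ν h E C : ℝ} (hb : 1 ≤ b) (hν : 1 ≤ ν) (hE : 0 < E)
    (hEh : h ≤ Real.log (1 + E)) (hE1 : 1 ≤ Real.log (1 + E))
    (hC : ∀ r : ℝ, 0 ≤ r →
      r ≤ E + E * (ν * (2 * (2 * b + 1))) * Real.log (1 + 2 * b * r) → r ≤ C)
    (hpos : ∀ z ∈ G, 0 < bdist G z) (hU : IsUniform b G)
    (hγ : CurveIn G γ L x y) (hsolid : SolidArc G γ L ν h) {s t M : ℝ} (hs : 0 ≤ s)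
    (hst : s ≤ t) (ht : t ≤ L) (hM : ∀ u ∈ Icc s t, bdist G (γ u) ≤ M)
    (hMs : M / 2 ≤ bdist G (γ s)) (hMt : M / 2 ≤ bdist G (γ t)) :
    ∀ u ∈ Icc s t, dist (γ s) (γ u) ≤ C * M := by
  have hsub : Icc s t ⊆ Icc 0 L := Icc_subset_Icc hs ht
  have hs' : s ∈ Icc s t := ⟨le_rfl, hst⟩
  have ht' : t ∈ Icc s t := ⟨hst, le_rfl⟩
  have hMpos : 0 < M := (hpos _ (hγ.mem s (hsub hs'))).trans_le (hM s hs')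
  have hcont : ContinuousOn (fun u => dist (γ s) (γ u)) (Icc s t) :=
    (continuous_const.dist continuous_id).comp_continuousOn (hγ.lip.continuousOn.mono hsub)
  obtain ⟨w, hw, hmax⟩ := isCompact_Icc.exists_isMaxOn ⟨s, hs'⟩ hcont
  have hmax' : ∀ u ∈ Icc s t, dist (γ s) (γ u) ≤ dist (γ s) (γ w) := fun u hu => hmax hu
  intro u hu
  refine (hmax' u hu).trans ?_
  set d := dist (γ s) (γ w) with hd
  have hd0 : 0 ≤ d := dist_nonneg
  rw [← div_le_iff₀ hMpos]
  refine hC _ (by positivity) ?_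
  have hρ : 0 < E * M := by positivity
  set n := ⌊d / (E * M)⌋₊ with hn
  have hnle : n * (E * M) ≤ d := by
    rw [← le_div_iff₀ hρ]
    exact Nat.floor_le (by positivity)
  have hlt : d / (E * M) < n + 1 := Nat.lt_floor_add_one _
  have hk := qhDist_le_log hb hpos hU (hγ.mem s (hsub hs')) (hγ.mem t (hsub ht'))
    (half_pos hMpos) hMs hMt
  have hlogle : Real.log (1 + b * dist (γ s) (γ t) / (M / 2)) ≤
      Real.log (1 + 2 * b * (d / M)) := by
    apply Real.log_le_log (by positivity)
    have : b * dist (γ s) (γ t) ≤ b * d := by gcongr; exact hmax' t ht'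
    have h2 : 2 * b * (d / M) = b * d / (M / 2) := by field_simp
    rw [h2]
    gcongr
  have hnk : (n : ℝ) ≤ ν * qhDist G (γ s) (γ t) := by
    rcases Nat.eq_zero_or_pos n with h0 | hnpos
    · rw [h0]
      have := qhDist_nonneg (G := G) (γ s) (γ t)
      push_cast
      positivity
    · obtain ⟨v, hv, hvmem, hval⟩ := exists_monotone_levels hρ.le
        (f := fun u => dist (γ s) (γ u)) (by simp) n hw.1
        (hcont.mono (Icc_subset_Icc_right hw.2)) hnle
      have hvmem' : ∀ i ≤ n, v i ∈ Icc s t := fun i hi =>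
        ⟨(hvmem i hi).1, (hvmem i hi).2.trans hw.2⟩
      have hstep : ∀ i < n, Real.log (1 + E) ≤ qhDist G (γ (v i)) (γ (v (i + 1))) := by
        intro i hi
        have hi0 := hvmem' i hi.le
        have hi1 := hvmem' (i + 1) hi
        refine le_trans ?_ (log_le_qhDist_source hpos hU (hγ.mem _ (hsub hi0))
          (hγ.mem _ (hsub hi1)))
        apply Real.log_le_log (by positivity)
        gcongr
        rw [le_div_iff₀ (hpos _ (hγ.mem _ (hsub hi0)))]
        have h1 := hval i hi.le
        have h2 := hval (i + 1) hi
        have h3 := dist_triangle (γ s) (γ (v i)) (γ (v (i + 1)))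
        push_cast at h2
        have h4 := mul_le_mul_of_nonneg_left (hM _ hi0) hE.le
        linarith
      have hsum := hsolid.sum_le hpos hγ hs hst ht hnpos hv hvmem'
        fun i hi => hEh.trans (hstep i hi)
      refine le_trans ?_ hsum
      calc (n : ℝ) = ∑ _i ∈ Finset.range n, (1 : ℝ) := by simp
        _ ≤ _ := Finset.sum_le_sum fun i hi =>
          hE1.trans (hstep i (Finset.mem_range.mp hi))
  have hb0 : 0 ≤ 2 * (2 * b + 1) := by linarith
  have hk' : ν * qhDist G (γ s) (γ t) ≤
      ν * (2 * (2 * b + 1) * Real.log (1 + 2 * b * (d / M))) := by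
    gcongr
    exact hk.trans (by gcongr)
  have hdiv : d / M = E * (d / (E * M)) := by field_simp
  rw [hdiv] at hk' ⊢
  have := mul_le_mul_of_nonneg_left (hlt.le.trans (by linarith : (n : ℝ) + 1 ≤
    ν * (2 * (2 * b + 1) * Real.log (1 + 2 * b * (E * (d / (E * M))))) + 1)) hE.le
  linarith

lemma exists_first_level {g : ℝ → ℝ} {s τ T : ℝ} (hsτ : s ≤ τ)
    (hg : ContinuousOn g (Icc s τ)) (hgs : g s ≤ T) (hgτ : T ≤ g τ) :
    ∃ σ ∈ Icc s τ, g σ = T ∧ ∀ u ∈ Icc s σ, g u ≤ T := by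
  have hclosed : IsCompact (Icc s τ ∩ g ⁻¹' Ici T) :=
    isCompact_Icc.of_isClosed_subset
      (hg.preimage_isClosed_of_isClosed isClosed_Icc isClosed_Ici) inter_subset_left
  obtain ⟨σ, ⟨hσ, hσT⟩, hleast⟩ := hclosed.exists_isLeast ⟨τ, ⟨hsτ, le_rfl⟩, hgτ⟩
  obtain ⟨v, hv, hgv⟩ := intermediate_value_Icc hσ.1
    (hg.mono (Icc_subset_Icc_right hσ.2)) (show T ∈ Icc (g s) (g σ) from ⟨hgs, hσT⟩)
  have hvσ : v = σ :=
    le_antisymm hv.2 (hleast ⟨⟨hv.1, hv.2.trans hσ.2⟩, hgv.ge⟩)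
  subst hvσ
  refine ⟨v, hσ, hgv, fun u hu => ?_⟩
  by_contra! hlt
  have := hleast ⟨⟨hu.1, hu.2.trans hσ.2⟩, hlt.le⟩
  rw [le_antisymm hu.2 this, hgv] at hlt
  exact hlt.false

/-- If pieces of `f` on which `g` oscillates by a factor at most `2` have diameter controlled by
`g`, then so has the initial piece up to any point where `g` is maximal on that piece. -/
lemma dist_le_of_dyadic_pieces {f : ℝ → X} {g : ℝ → ℝ} {s ℓ C : ℝ} (hC : 0 ≤ C)
    (hg : ContinuousOn g (Icc s ℓ)) (hgpos : ∀ u ∈ Icc s ℓ, 0 < g u)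
    (hpiece : ∀ σ τ M : ℝ, s ≤ σ → σ ≤ τ → τ ≤ ℓ → (∀ u ∈ Icc σ τ, g u ≤ M) →
      M / 2 ≤ g σ → M / 2 ≤ g τ → ∀ u ∈ Icc σ τ, dist (f u) (f τ) ≤ C * M)
    {τ : ℝ} (hτ : τ ∈ Icc s ℓ) (hmax : ∀ u ∈ Icc s τ, g u ≤ g τ) :
    ∀ u ∈ Icc s τ, dist (f u) (f τ) ≤ 2 * C * g τ := by
  have hs0 : 0 < g s := hgpos s ⟨le_rfl, hτ.1.trans hτ.2⟩
  obtain ⟨n, hn⟩ : ∃ n : ℕ, g τ ≤ 2 ^ n * g s := by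
    obtain ⟨n, hn⟩ := pow_unbounded_of_one_lt (g τ / g s) one_lt_two
    exact ⟨n, by rw [div_lt_iff₀ hs0] at hn; exact hn.le⟩
  induction n generalizing τ with
  | zero =>
    intro u hu
    have hpos := hgpos τ hτ
    have := hpiece s τ (g τ) le_rfl hτ.1 hτ.2 hmax (by linarith) (by linarith) u hu
    nlinarith [mul_nonneg hC hpos.le]
  | succ n ih =>
    have hpos := hgpos τ hτ
    have hCg := mul_nonneg hC hpos.le
    intro u hu
    rcases le_total (g τ / 2) (g s) with hle | hle
    · have := hpiece s τ (g τ) le_rfl hτ.1 hτ.2 hmax hle (by linarith) u hu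
      linarith
    · obtain ⟨σ, hσ, hgσ, hσmax⟩ := exists_first_level hτ.1
        (hg.mono (Icc_subset_Icc_right hτ.2)) hle (by linarith : g τ / 2 ≤ g τ)
      have hlast := hpiece σ τ (g τ) hσ.1 hσ.2 hτ.2
        (fun v hv => hmax v ⟨hσ.1.trans hv.1, hv.2⟩) hgσ.ge (by linarith)
      rcases le_total σ u with hσu | huσ
      · linarith [hlast u ⟨hσu, hu.2⟩]
      · have hinit := ih ⟨hσ.1, hσ.2.trans hτ.2⟩ (by rwa [hgσ])
          (by rw [hgσ]; rw [pow_succ] at hn; linarith) u ⟨hu.1, huσ⟩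
        rw [hgσ] at hinit
        linarith [hlast σ ⟨le_rfl, hσ.2⟩, dist_triangle (f u) (f σ) (f τ)]

lemma diam_image_le_of_dist_le {ι : Type*} {S : Set ι} {f : ι → X} {p : X} {r : ℝ} (hr : 0 ≤ r)
    (h : ∀ u ∈ S, dist p (f u) ≤ r) : Metric.diam (f '' S) ≤ 2 * r := by
  refine Metric.diam_le_of_forall_dist_le (by linarith) ?_
  rintro _ ⟨u, hu, rfl⟩ _ ⟨v, hv, rfl⟩
  linarith [dist_triangle_left (f u) (f v) p, h u hu, h v hv]

/-- A solid arc whose endpoints are far apart relative to their boundary distance. -/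
lemma SolidArc.diam_le_of_bdist_le {b ν h C T : ℝ} (hb : 1 ≤ b) (hν : 1 ≤ ν) (hC : 0 ≤ C)
    (hpos : ∀ z ∈ G, 0 < bdist G z) (hU : IsUniform b G)
    (hγ : CurveIn G γ L x y) (hsolid : SolidArc G γ L ν h)
    (hpiece : ∀ s t M : ℝ, 0 ≤ s → s ≤ t → t ≤ L → (∀ u ∈ Icc s t, bdist G (γ u) ≤ M) →
      M / 2 ≤ bdist G (γ s) → M / 2 ≤ bdist G (γ t) →
      ∀ u ∈ Icc s t, dist (γ s) (γ u) ≤ C * M)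
    (hx : bdist G x ≤ T) (hy : bdist G y ≤ T) (hT : dist x y ≤ T) :
    Metric.diam (γ '' Icc 0 L) ≤
      2 * ((8 * C + Real.exp (max h (ν * (2 * (2 * b + 1) *
        Real.log (1 + b * (8 * C + 1))))) + 1) * T) := by
  set Q := max h (ν * (2 * (2 * b + 1) * Real.log (1 + b * (8 * C + 1)))) with hQ
  have hTpos : 0 < T := (hpos x (hγ.source ▸ hγ.mem 0 ⟨le_rfl, hγ.nonneg⟩)).trans_le hx
  have hg := hγ.continuousOn_bdist
  have hgpos : ∀ u ∈ Icc 0 L, 0 < bdist G (γ u) := fun u hu => hpos _ (hγ.mem u hu)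
  have hinit : ∀ τ ∈ Icc 0 L, (∀ u ∈ Icc 0 τ, bdist G (γ u) ≤ bdist G (γ τ)) →
      ∀ u ∈ Icc 0 τ, dist (γ u) (γ τ) ≤ 4 * C * bdist G (γ τ) := by
    intro τ hτ hmax u hu
    have := dist_le_of_dyadic_pieces (f := γ) (g := fun u => bdist G (γ u)) (C := 2 * C)
      (by positivity) hg hgpos
      (fun σ τ M h1 h2 h3 h4 h5 h6 u hu => by
        have hp := hpiece σ τ M h1 h2 h3 h4 h5 h6
        linarith [dist_triangle_left (γ u) (γ τ) (γ σ), hp u hu, hp τ ⟨h2, le_rfl⟩]) hτ hmax u hu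
    linarith
  have hfinal : ∀ τ ∈ Icc 0 L, (∀ u ∈ Icc τ L, bdist G (γ u) ≤ bdist G (γ τ)) →
      ∀ u ∈ Icc τ L, dist (γ u) (γ τ) ≤ 4 * C * bdist G (γ τ) := by
    intro τ hτ hmax u hu
    have hflip : ∀ v ∈ Icc 0 L, L - v ∈ Icc 0 L := fun v hv =>
      ⟨by linarith [hv.2], by linarith [hv.1]⟩
    have := dist_le_of_dyadic_pieces (f := fun v => γ (L - v))
      (g := fun v => bdist G (γ (L - v))) (s := 0) (ℓ := L) (C := 2 * C)
      (by positivity) (hg.comp (by fun_prop) hflip) (fun v hv => hgpos _ (hflip v hv))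
      (fun σ τ M h1 h2 h3 h4 h5 h6 u hu => by
        have hp := hpiece (L - τ) (L - σ) M (by linarith) (by linarith) (by linarith)
          (fun v hv => by
            have := h4 (L - v) ⟨by linarith [hv.2], by linarith [hv.1]⟩
            simpa using this) h6 h5 (L - u) ⟨by linarith [hu.2], by linarith [hu.1]⟩
        rw [dist_comm] at hp
        have hM : 0 ≤ M := (hgpos _ (hflip u ⟨h1.trans hu.1, hu.2.trans h3⟩)).le.trans (h4 u hu)
        nlinarith [mul_nonneg hC hM]) (hflip τ hτ)
      (fun v hv => by
        have := hmax (L - v) ⟨by linarith [hv.2], by linarith [hv.1]⟩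
        simpa using this) (L - u) ⟨by linarith [hu.2], by linarith [hu.1]⟩
    simp only [sub_sub_cancel] at this
    linarith
  have hexp := Real.exp_pos Q
  have hCT : 0 ≤ C * T := by positivity
  have hET : 0 ≤ Real.exp Q * T := by positivity
  by_cases hreach : ∃ w ∈ Icc 0 L, T ≤ bdist G (γ w)
  · obtain ⟨w, hw, hTw⟩ := hreach
    obtain ⟨σ, hσ, hgσ, hσmax⟩ := exists_first_level hw.1
      (hg.mono (Icc_subset_Icc_right hw.2)) (by rw [hγ.source]; exact hx) hTw
    obtain ⟨σ', hσ', hgσ', hσmax'⟩ := exists_first_level (g := fun v => bdist G (γ (L - v)))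
      (s := 0) (τ := L - w) (T := T) (by linarith [hw.2])
      (hg.comp (by fun_prop) fun v hv => ⟨by linarith [hv.2, hw.1], by linarith [hv.1]⟩)
      (by simpa [hγ.target] using hy) (by simpa using hTw)
    set τ := L - σ' with hτ
    have hσL : σ ∈ Icc 0 L := ⟨hσ.1, hσ.2.trans hw.2⟩
    have hτL : τ ∈ Icc 0 L := ⟨by linarith [hσ'.2, hw.1], by linarith [hσ'.1]⟩
    have hστ : σ ≤ τ := by linarith [hσ.2, hσ'.2]
    have hA := hinit σ hσL (by rwa [hgσ])
    have hB := hfinal τ hτL (fun u hu => by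
      rw [hgσ']
      have := hσmax' (L - u) ⟨by linarith [hu.2], by linarith [hu.1]⟩
      simpa using this)
    rw [hgσ] at hA
    rw [hgσ'] at hB
    have hA0 := hA 0 ⟨le_rfl, hσ.1⟩
    have hBL := hB L ⟨hτL.2, le_rfl⟩
    rw [hγ.source] at hA0
    rw [hγ.target] at hBL
    have hdist : dist (γ σ) (γ τ) ≤ (8 * C + 1) * T := by
      have h1 := dist_triangle4 (γ σ) x y (γ τ)
      rw [dist_comm (γ σ) x] at h1
      linarith
    have hk := qhDist_le_log hb hpos hU (hγ.mem σ hσL) (hγ.mem τ hτL) hTpos hgσ.ge hgσ'.ge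
    have hlog : Real.log (1 + b * dist (γ σ) (γ τ) / T) ≤ Real.log (1 + b * (8 * C + 1)) := by
      apply Real.log_le_log (by positivity)
      gcongr
      rw [div_le_iff₀ hTpos, mul_assoc]
      gcongr
    have hkQ : ν * qhDist G (γ σ) (γ τ) ≤
        ν * (2 * (2 * b + 1) * Real.log (1 + b * (8 * C + 1))) := by
      gcongr
      exact hk.trans (by gcongr)
    refine diam_image_le_of_dist_le (p := γ σ) (by positivity) fun u hu => ?_
    rcases le_total u σ with huσ | hσu
    · rw [dist_comm]
      linarith [hA u ⟨hu.1, huσ⟩]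
    rcases le_total u τ with huτ | hτu
    · have hkq := (hsolid.qhDist_le_max hpos hγ hσL.1 le_rfl hσu huτ hτL.2).trans
        (max_le_max_left h hkQ)
      have := dist_le_of_log_le (hpos _ (hγ.mem σ hσL)) dist_nonneg
        ((log_le_qhDist_source hpos hU (hγ.mem σ hσL) (hγ.mem u hu)).trans hkq)
      rw [hgσ] at this
      linarith
    · have h1 := hB u ⟨hτu, hu.2⟩
      have hkq := (hsolid.qhDist_le_max hpos hγ hσL.1 le_rfl hστ le_rfl hτL.2).trans
        (max_le_max_left h hkQ)
      have h2 := dist_le_of_log_le (hpos _ (hγ.mem σ hσL)) dist_nonneg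
        ((log_le_qhDist_source hpos hU (hγ.mem σ hσL) (hγ.mem τ hτL)).trans hkq)
      rw [hgσ] at h2
      rw [dist_comm] at h1
      linarith [dist_triangle (γ σ) (γ τ) (γ u)]
  · push Not at hreach
    obtain ⟨τ, hτ, hmax⟩ := isCompact_Icc.exists_isMaxOn ⟨0, le_rfl, hγ.nonneg⟩ hg
    have hmax' : ∀ u ∈ Icc 0 L, bdist G (γ u) ≤ bdist G (γ τ) := fun u hu => hmax hu
    have hle : 4 * C * bdist G (γ τ) ≤ 4 * C * T := by
      gcongr
      exact (hreach τ hτ).le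
    refine diam_image_le_of_dist_le (p := γ τ) (by positivity) fun u hu => ?_
    rw [dist_comm]
    rcases le_total u τ with huτ | hτu
    · linarith [hinit τ hτ (fun v hv => hmax' v ⟨hv.1, hv.2.trans hτ.2⟩) u ⟨hu.1, huτ⟩]
    · linarith [hfinal τ hτ (fun v hv => hmax' v ⟨hτ.1.trans hv.1, hv.2⟩) u ⟨hτu, hu.2⟩]

/-- A solid arc whose endpoints are close relative to their boundary distance. -/
lemma SolidArc.diam_le_of_dist_le {b ν h : ℝ} (hb : 1 ≤ b) (hν : 1 ≤ ν) (hh : 0 ≤ h)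
    (hpos : ∀ z ∈ G, 0 < bdist G z) (hU : IsUniform b G)
    (hγ : CurveIn G γ L x y) (hsolid : SolidArc G γ L ν h)
    (hclose : 2 * b * dist x y ≤ min (bdist G x) (bdist G y)) :
    Metric.diam (γ '' Icc 0 L) ≤
      max (2 * (ν * (2 * (2 * b + 1)) * b * Real.exp (ν * (2 * (2 * b + 1)))) * dist x y)
        (2 * (Real.exp h - 1) * min (bdist G x) (bdist G y)) := by
  set m := min (bdist G x) (bdist G y) with hm
  set a := ν * (2 * (2 * b + 1)) with ha
  have ha0 : 0 ≤ a := by positivity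
  have h0 : (0 : ℝ) ∈ Icc 0 L := ⟨le_rfl, hγ.nonneg⟩
  have hL : L ∈ Icc 0 L := ⟨hγ.nonneg, le_rfl⟩
  have hxG : x ∈ G := hγ.source ▸ hγ.mem 0 h0
  have hyG : y ∈ G := hγ.target ▸ hγ.mem L hL
  have hmpos : 0 < m := lt_min (hpos x hxG) (hpos y hyG)
  have hd0 : 0 ≤ dist x y := dist_nonneg
  set q := b * dist x y / m with hq
  have hq0 : 0 ≤ q := by positivity
  have hq1 : q ≤ 1 := by
    rw [hq, div_le_one hmpos]
    nlinarith [mul_nonneg (zero_le_one.trans hb) hd0]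
  have hk : ν * qhDist G x y ≤ a * q := by
    have h1 := qhDist_le_log hb hpos hU hxG hyG hmpos (min_le_left _ _) (min_le_right _ _)
    have h2 : Real.log (1 + q) ≤ q := by
      linarith [Real.log_le_sub_one_of_pos (by positivity : 0 < 1 + q)]
    calc ν * qhDist G x y ≤ ν * (2 * (2 * b + 1) * q) := by
          gcongr
          exact h1.trans (by gcongr)
      _ = a * q := by rw [ha]; ring
  have hexph : 0 ≤ Real.exp h - 1 := by linarith [Real.add_one_le_exp h]
  have hlin : (Real.exp (a * q) - 1) * m ≤ a * b * Real.exp a * dist x y := by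
    have h1 : Real.exp (a * q) - 1 ≤ a * q * Real.exp (a * q) := by
      have h2 := Real.add_one_le_exp (-(a * q))
      have h3 := mul_le_mul_of_nonneg_right h2 (Real.exp_pos (a * q)).le
      rw [← Real.exp_add, neg_add_cancel, Real.exp_zero] at h3
      linarith
    have h2 : a * q * Real.exp (a * q) ≤ a * q * Real.exp a := by
      gcongr
      nlinarith
    calc (Real.exp (a * q) - 1) * m ≤ a * q * Real.exp a * m := by
          gcongr
          exact h1.trans h2
      _ = a * b * Real.exp a * dist x y := by rw [hq]; field_simp
  have hbound : ∀ d k : ℝ, 0 ≤ d → Real.log (1 + d / m) ≤ k →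
      k ≤ max h (ν * qhDist G x y) →
      d ≤ max (a * b * Real.exp a * dist x y) ((Real.exp h - 1) * m) := by
    intro d k hd hlog hle
    rcases le_max_iff.mp hle with hle | hle
    · exact le_max_of_le_right (dist_le_of_log_le hmpos hd (hlog.trans hle))
    · exact le_max_of_le_left
        ((dist_le_of_log_le hmpos hd (hlog.trans (hle.trans hk))).trans hlin)
  have hrad : 0 ≤ max (a * b * Real.exp a * dist x y) ((Real.exp h - 1) * m) :=
    le_max_of_le_right (by positivity)
  have hends : ν * qhDist G (γ 0) (γ L) = ν * qhDist G x y := by rw [hγ.source, hγ.target]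
  suffices Metric.diam (γ '' Icc 0 L) ≤
      2 * max (a * b * Real.exp a * dist x y) ((Real.exp h - 1) * m) by
    rw [mul_max_of_nonneg _ _ (zero_le_two)] at this
    refine this.trans (le_of_eq ?_)
    congr 1 <;> ring
  rcases min_choice (bdist G x) (bdist G y) with hmin | hmin
  · refine diam_image_le_of_dist_le (p := x) hrad fun u hu => ?_
    have h1 := log_le_qhDist_source hpos hU hxG (hγ.mem u hu)
    rw [← hmin, ← hm] at h1
    have h2 := hsolid.qhDist_le_max hpos hγ le_rfl le_rfl hu.1 hu.2 le_rfl
    rw [hends, hγ.source] at h2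
    exact hbound _ _ dist_nonneg h1 h2
  · refine diam_image_le_of_dist_le (p := y) hrad fun u hu => ?_
    have h1 := log_le_qhDist_target hpos hU (hγ.mem u hu) hyG
    rw [← hmin, ← hm] at h1
    have h2 := hsolid.qhDist_le_max hpos hγ le_rfl hu.1 hu.2 le_rfl le_rfl
    rw [hends, hγ.target] at h2
    rw [dist_comm]
    exact hbound _ _ dist_nonneg h1 h2

end SolidArcs

/-- Lemma 5(2): There is a constant `μ₃ = μ₃(b,c,ν,h) ≥ 1` such that
any `(ν,h)`-solid arc `γ` with endpoints `x, y` in a `b`-uniform proper domain `G`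
of a `c`-quasiconvex space satisfies
`diam(γ) ≤ max{μ₃|x−y|, 2(e^h − 1)·min{δ_G(x), δ_G(y)}}`. -/
theorem stmt8 (b c ν h : ℝ) (hb : 1 ≤ b) (hc : 1 ≤ c) (hν : 1 ≤ ν) (hh : 0 ≤ h) :
    ∃ μ₃ : ℝ, 1 ≤ μ₃ ∧
      ∀ (X : Type) [MetricSpace X], QCSpace c X →
        ∀ G : Set X, IsProperDomain G → IsUniform b G →
          ∀ (x y : X) (γ : ℝ → X) (L : ℝ), CurveIn G γ L x y →
            SolidArc G γ L ν h →
            Metric.diam (γ '' Set.Icc 0 L) ≤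
              max (μ₃ * dist x y)
                (2 * (Real.exp h - 1) * min (bdist G x) (bdist G y)) := by
  set H := max h 1 with hH
  set E := Real.exp H - 1 with hE
  have hEpos : 0 < E := by
    have : 1 ≤ H := le_max_right _ _
    linarith [Real.add_one_le_exp H]
  have hlogE : Real.log (1 + E) = H := by rw [hE, add_sub_cancel, Real.log_exp]
  obtain ⟨C, hC1, hC⟩ := exists_bound_of_le_log (a := E * (ν * (2 * (2 * b + 1))))
    (β := 2 * b) (by positivity) (by positivity) E
  set μ := 2 * ((8 * C + Real.exp (max h (ν * (2 * (2 * b + 1) *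
        Real.log (1 + b * (8 * C + 1))))) + 1) * (3 * b)) with hμ
  set μ' := 2 * (ν * (2 * (2 * b + 1)) * b * Real.exp (ν * (2 * (2 * b + 1)))) with hμ'
  refine ⟨max 1 (max μ μ'), le_max_left _ _, ?_⟩
  intro X _ hX G hG hU x y γ L hγ hsolid
  have hpos : ∀ z ∈ G, 0 < bdist G z := fun z hz => bdist_pos hX hG hz
  have hd0 : 0 ≤ dist x y := dist_nonneg
  rcases le_total (2 * b * dist x y) (min (bdist G x) (bdist G y)) with hclose | hfar
  · refine (hsolid.diam_le_of_dist_le hb hν hh hpos hU hγ hclose).trans ?_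
    gcongr
    exact (le_max_right μ μ').trans (le_max_right _ _)
  · refine le_max_of_le_left ?_
    have hxy := bdist_le_bdist_add_dist (G := G) x y
    have hyx := bdist_le_bdist_add_dist (G := G) y x
    rw [dist_comm y x] at hyx
    have hbd : dist x y ≤ b * dist x y := le_mul_of_one_le_left hd0 hb
    have hends : bdist G x ≤ 3 * b * dist x y ∧ bdist G y ≤ 3 * b * dist x y := by
      rcases min_le_iff.mp hfar with hle | hle <;> constructor <;> linarith
    have hdiam := hsolid.diam_le_of_bdist_le hb hν (zero_le_one.trans hC1) hpos hU hγ
      (fun s t M hs hst ht => hsolid.dist_le_of_bdist_le hb hν hEpos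
        (hlogE ▸ le_max_left _ _) (hlogE ▸ le_max_right _ _) hC hpos hU hγ hs hst ht)
      hends.1 hends.2 (by linarith)
    calc Metric.diam (γ '' Icc 0 L) ≤ μ * dist x y := by rw [hμ]; linarith
      _ ≤ max 1 (max μ μ') * dist x y := by
        gcongr
        exact (le_max_left μ μ').trans (le_max_right _ _)
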